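/- Fix θ ∈ S^{d−1} and let P_{2,a}(ℝ^d, θ) be the set of μ ∈ P_2(ℝ^d) such that P_θ#μ is atomless. Then PS_θ is a metric on P_{2,a}(ℝ^d, θ); in particular, for all μ1, μ2, μ3 ∈ P_{2,a}(ℝ^d, θ), PS_θ(μ1, μ3) ≤ PS_θ(μ1, μ2) + PS_θ(μ2, μ3). -/

import Mathlib

open MeasureTheory Filter Topology ProbabilityTheory
open scoped ENNReal RealInnerProductSpace Classical

noncomputable section

/-- Euclidean space ℝ^d. -/
abbrev Euc (d : ℕ) : Type := EuclideanSpace ℝ (Fin d)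

/-- `P2` : Borel probability measures with finite second moment. -/
def P2 {E : Type*} [NormedAddCommGroup E] [MeasurableSpace E] : Set (Measure E) :=
  {μ | IsProbabilityMeasure μ ∧ Integrable (fun x => ‖x‖ ^ 2) μ}

/-- Couplings between two measures. -/
def Coupling {E F : Type*} [MeasurableSpace E] [MeasurableSpace F]
    (μ : Measure E) (ν : Measure F) : Set (Measure (E × F)) :=
  {π | IsProbabilityMeasure π ∧ π.map Prod.fst = μ ∧ π.map Prod.snd = ν}

/-- Quadratic transport cost of a plan. -/
def tCost {E : Type*} [NormedAddCommGroup E] [MeasurableSpace E]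
    (π : Measure (E × E)) : ℝ :=
  ∫ p, ‖p.1 - p.2‖ ^ 2 ∂π

/-- Squared 2-Wasserstein distance. -/
def W2sq {E : Type*} [NormedAddCommGroup E] [MeasurableSpace E] (μ ν : Measure E) : ℝ :=
  sInf (tCost '' Coupling μ ν)

/-- 2-Wasserstein distance. -/
def W2 {E : Type*} [NormedAddCommGroup E] [MeasurableSpace E] (μ ν : Measure E) : ℝ :=
  Real.sqrt (W2sq μ ν)

/-- Optimal transport plans for the quadratic cost. -/
def OptPlan {E : Type*} [NormedAddCommGroup E] [MeasurableSpace E]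
    (μ ν : Measure E) : Set (Measure (E × E)) :=
  {π | π ∈ Coupling μ ν ∧ tCost π = W2sq μ ν}

/-- `Gamma ν μ1 μ2` : probability measures on `E × E × E` whose (1,2)-marginal is an optimal
plan between `ν` and `μ1` and whose (1,3)-marginal is an optimal plan between `ν` and `μ2`. -/
def Gamma {E : Type*} [NormedAddCommGroup E] [MeasurableSpace E]
    (ν μ1 μ2 : Measure E) : Set (Measure (E × E × E)) :=
  {ρ | IsProbabilityMeasure ρ ∧
    ρ.map (fun p => (p.1, p.2.1)) ∈ OptPlan ν μ1 ∧
    ρ.map (fun p => (p.1, p.2.2)) ∈ OptPlan ν μ2}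

/-- Cost `∫ ‖x1 − x2‖² dρ(y, x1, x2)` of a 3-plan. -/
def pivotCost {E : Type*} [NormedAddCommGroup E] [MeasurableSpace E]
    (ρ : Measure (E × E × E)) : ℝ :=
  ∫ p, ‖p.2.1 - p.2.2‖ ^ 2 ∂ρ

/-- Squared ν-based Wasserstein discrepancy. -/
def Wnusq {E : Type*} [NormedAddCommGroup E] [MeasurableSpace E]
    (ν μ1 μ2 : Measure E) : ℝ :=
  sInf (pivotCost '' Gamma ν μ1 μ2)

/-- ν-based Wasserstein discrepancy. -/
def Wnu {E : Type*} [NormedAddCommGroup E] [MeasurableSpace E]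
    (ν μ1 μ2 : Measure E) : ℝ :=
  Real.sqrt (Wnusq ν μ1 μ2)

/-- Weak convergence of a sequence of measures (against bounded continuous functions). -/
def WeakConv {E : Type*} [MeasurableSpace E] [TopologicalSpace E]
    (μs : ℕ → Measure E) (μ : Measure E) : Prop :=
  ∀ f : BoundedContinuousFunction E ℝ,
    Tendsto (fun n => ∫ x, f x ∂(μs n)) atTop (𝓝 (∫ x, f x ∂μ))

/-- Quantile function (pseudo-inverse c.d.f.) of a measure on ℝ. -/
def quantile (ν : Measure ℝ) (t : ℝ) : ℝ :=
  sInf {s : ℝ | ENNReal.ofReal t ≤ ν (Set.Iic s)}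

/-- Pushforward of `μ` by the projection `P_θ : x ↦ ⟪θ, x⟫`. -/
def projLine {d : ℕ} (θ : Euc d) (μ : Measure (Euc d)) : Measure ℝ :=
  μ.map (fun x => ⟪θ, x⟫)

/-- `μ_θ[μ1, μ2]` : the (unique) Wasserstein mean of `Q_θ#μ1` and `Q_θ#μ2`, given by the
explicit quantile formula `[(½ F_{ν1}^{[-1]} + ½ F_{ν2}^{[-1]})·θ]#L_{[0,1]}`. -/
def pivotMiddle {d : ℕ} (θ : Euc d) (μ1 μ2 : Measure (Euc d)) : Measure (Euc d) :=
  (volume.restrict (Set.Icc (0 : ℝ) 1)).map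
    (fun t => ((1 / 2) * quantile (projLine θ μ1) t
      + (1 / 2) * quantile (projLine θ μ2) t) • θ)

/-- Squared Pivot Sliced discrepancy. -/
def PSsq {d : ℕ} (θ : Euc d) (μ1 μ2 : Measure (Euc d)) : ℝ :=
  Wnusq (pivotMiddle θ μ1 μ2) μ1 μ2

/-- Pivot Sliced discrepancy. -/
def PS {d : ℕ} (θ : Euc d) (μ1 μ2 : Measure (Euc d)) : ℝ :=
  Real.sqrt (PSsq θ μ1 μ2)

/-- `π_θ[μ1, μ2]` : the unique optimal 1D plan between `P_θ#μ1` and `P_θ#μ2`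
(co-monotone quantile coupling). -/
def piTheta {d : ℕ} (θ : Euc d) (μ1 μ2 : Measure (Euc d)) : Measure (ℝ × ℝ) :=
  (volume.restrict (Set.Icc (0 : ℝ) 1)).map
    (fun t => (quantile (projLine θ μ1) t, quantile (projLine θ μ2) t))

/-- `Ω_θ(μ1, μ2)` : couplings of `μ1, μ2` whose projection by `(P_θ, P_θ)` is `π_θ[μ1, μ2]`. -/
def OmegaTheta {d : ℕ} (θ : Euc d) (μ1 μ2 : Measure (Euc d)) :
    Set (Measure (Euc d × Euc d)) :=
  {ω | ω ∈ Coupling μ1 μ2 ∧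
    ω.map (fun p => (⟪θ, p.1⟫, ⟪θ, p.2⟫)) = piTheta θ μ1 μ2}

/-- Squared constrained Wasserstein discrepancy `CW_θ²`. -/
def CWsq {d : ℕ} (θ : Euc d) (μ1 μ2 : Measure (Euc d)) : ℝ :=
  sInf (tCost '' OmegaTheta θ μ1 μ2)

/-- Wasserstein means: minimisers of `μ ↦ W₂²(μ1, μ) + W₂²(μ, μ2)` over `P2`. -/
def WMean {d : ℕ} (μ1 μ2 : Measure (Euc d)) : Set (Measure (Euc d)) :=
  {μ | μ ∈ (P2 : Set (Measure (Euc d))) ∧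
    ∀ μ' ∈ (P2 : Set (Measure (Euc d))),
      W2sq μ1 μ + W2sq μ μ2 ≤ W2sq μ1 μ' + W2sq μ' μ2}

/-- Uniform empirical measure `1/n ∑ δ_{x_i}`. -/
def empMeasure {d n : ℕ} (x : Fin n → Euc d) : Measure (Euc d) :=
  (n : ℝ≥0∞)⁻¹ • ∑ i, Measure.dirac (x i)

/-- Measures in `P2` whose projection `P_θ#μ` is atomless. -/
def P2a {d : ℕ} (θ : Euc d) : Set (Measure (Euc d)) :=
  {μ | μ ∈ (P2 : Set (Measure (Euc d))) ∧ ∀ s : ℝ, projLine θ μ {s} = 0}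

section
/-- triangle region -/
def triSet : Set ((ℝ × ℝ) × (ℝ × ℝ)) :=
  {w | w.1.1 ≤ w.2.1 ∧ w.2.1 ≤ w.2.2 ∧ w.2.2 < w.1.2}

lemma triSet_meas : MeasurableSet triSet := by
  have a : MeasurableSet {w : (ℝ × ℝ) × (ℝ × ℝ) | w.1.1 ≤ w.2.1} :=
    measurableSet_le (by fun_prop) (by fun_prop)
  have b : MeasurableSet {w : (ℝ × ℝ) × (ℝ × ℝ) | w.2.1 ≤ w.2.2} :=
    measurableSet_le (by fun_prop) (by fun_prop)
  have c : MeasurableSet {w : (ℝ × ℝ) × (ℝ × ℝ) | w.2.2 < w.1.2} :=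
    measurableSet_lt (by fun_prop) (by fun_prop)
  exact a.inter (b.inter c)

lemma tri_vol (x y : ℝ) :
    2 * (volume : Measure (ℝ × ℝ)) {z | x ≤ z.1 ∧ z.1 ≤ z.2 ∧ z.2 < y} =
      if x ≤ y then ENNReal.ofReal ((x - y) ^ 2) else 0 := by
  have hm : MeasurableSet {z : ℝ × ℝ | x ≤ z.1 ∧ z.1 ≤ z.2 ∧ z.2 < y} :=
    (measurable_prodMk_left (x := (x, y))) triSet_meas
  rw [Measure.volume_eq_prod, Measure.prod_apply hm]
  have h1 : ∀ s : ℝ, (volume : Measure ℝ) (Prod.mk s ⁻¹' {z : ℝ × ℝ | x ≤ z.1 ∧ z.1 ≤ z.2 ∧ z.2 < y})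
      = (Set.Ioc x y).indicator (fun s => ENNReal.ofReal (y - s)) s + (if s = x then ENNReal.ofReal (y - s) else 0) := by
    intro s
    by_cases hs : x ≤ s
    · have : Prod.mk s ⁻¹' {z : ℝ × ℝ | x ≤ z.1 ∧ z.1 ≤ z.2 ∧ z.2 < y} = Set.Ico s y := by
        ext t; simp [hs]
      rw [this, Real.volume_Ico]
      rcases hs.eq_or_lt with rfl | h
      · simp
      · rw [if_neg h.ne', add_zero]
        by_cases h2 : s ≤ y
        · rw [Set.indicator_of_mem (Set.mem_Ioc.2 ⟨h, h2⟩)]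
        · rw [Set.indicator_of_notMem (fun h' => h2 h'.2), ENNReal.ofReal_of_nonpos (by linarith)]
    · have : Prod.mk s ⁻¹' {z : ℝ × ℝ | x ≤ z.1 ∧ z.1 ≤ z.2 ∧ z.2 < y} = ∅ := by
        ext t; simp [hs]
      rw [this, if_neg (by rintro rfl; simp at hs), Set.indicator_of_notMem (fun h' => hs h'.1.le)]
      simp
  have h2 : (fun s : ℝ => (volume : Measure ℝ) (Prod.mk s ⁻¹' {z : ℝ × ℝ | x ≤ z.1 ∧ z.1 ≤ z.2 ∧ z.2 < y}))
      =ᵐ[volume] (Set.Ioc x y).indicator (fun s => ENNReal.ofReal (y - s)) := by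
    have : ∀ᵐ s : ℝ, s ≠ x := by simp [ae_iff]
    filter_upwards [this] with s hs
    rw [h1, if_neg hs, add_zero]
  rw [lintegral_congr_ae h2, lintegral_indicator measurableSet_Ioc]
  split_ifs with h
  · rw [← ofReal_integral_eq_lintegral_ofReal]
    · rw [← intervalIntegral.integral_of_le h]
      have : ∫ s in x..y, (y - s) = (x - y) ^ 2 / 2 := by
        rw [intervalIntegral.integral_sub (by simp) (by simp)]
        simp; ring
      rw [this]
      rw [← ENNReal.ofReal_ofNat 2, ← ENNReal.ofReal_mul (by norm_num)]
      congr 1; ring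
    · exact (continuous_const.sub continuous_id).integrableOn_Ioc
    · filter_upwards [ae_restrict_mem measurableSet_Ioc] with s hs
      simpa using hs.2
  · rw [Set.Ioc_eq_empty (by intro h'; exact h h'.le)]; simp

lemma sq_repr (x y : ℝ) : ENNReal.ofReal ((x - y) ^ 2) =
    2 * ((volume : Measure (ℝ × ℝ)) {z | x ≤ z.1 ∧ z.1 ≤ z.2 ∧ z.2 < y}
     + (volume : Measure (ℝ × ℝ)) {z | y ≤ z.1 ∧ z.1 ≤ z.2 ∧ z.2 < x}) := by
  rw [mul_add, tri_vol, tri_vol]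
  rcases lt_trichotomy x y with h | h | h
  · rw [if_pos h.le, if_neg (by linarith), add_zero]
  · subst h; simp
  · rw [if_neg (by linarith), if_pos h.le, zero_add]; congr 1; ring

lemma tri_swap (π : Measure (ℝ × ℝ)) [SFinite π] :
    ∫⁻ p, (volume : Measure (ℝ × ℝ)) {z | p.1 ≤ z.1 ∧ z.1 ≤ z.2 ∧ z.2 < p.2} ∂π
    = ∫⁻ z : ℝ × ℝ, π {p | p.1 ≤ z.1 ∧ z.1 ≤ z.2 ∧ z.2 < p.2} := by
  have h1 := Measure.prod_apply (μ := π) (ν := (volume : Measure (ℝ × ℝ))) triSet_meas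
  have h2 := Measure.prod_apply_symm (μ := π) (ν := (volume : Measure (ℝ × ℝ))) triSet_meas
  exact h1.symm.trans h2

lemma tri_swap' (π : Measure (ℝ × ℝ)) [SFinite π] :
    ∫⁻ p, (volume : Measure (ℝ × ℝ)) {z | p.2 ≤ z.1 ∧ z.1 ≤ z.2 ∧ z.2 < p.1} ∂π
    = ∫⁻ z : ℝ × ℝ, π {p | p.2 ≤ z.1 ∧ z.1 ≤ z.2 ∧ z.2 < p.1} := by
  have hm : MeasurableSet ((Prod.map Prod.swap id : (ℝ × ℝ) × (ℝ × ℝ) → _) ⁻¹' triSet) :=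
    (measurable_swap.prodMap measurable_id) triSet_meas
  have h1 := Measure.prod_apply (μ := π) (ν := (volume : Measure (ℝ × ℝ))) hm
  have h2 := Measure.prod_apply_symm (μ := π) (ν := (volume : Measure (ℝ × ℝ))) hm
  exact h1.symm.trans h2

lemma sq_lint (π : Measure (ℝ × ℝ)) [SFinite π] :
    ∫⁻ p, ENNReal.ofReal ((p.1 - p.2) ^ 2) ∂π =
     2 * ((∫⁻ z : ℝ × ℝ, π {p | p.1 ≤ z.1 ∧ z.1 ≤ z.2 ∧ z.2 < p.2}) +
      ∫⁻ z : ℝ × ℝ, π {p | p.2 ≤ z.1 ∧ z.1 ≤ z.2 ∧ z.2 < p.1}) := by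
  have hm := measurable_measure_prodMk_left (ν := (volume : Measure (ℝ × ℝ))) triSet_meas
  simp_rw [sq_repr]
  rw [lintegral_const_mul', lintegral_add_left, tri_swap, tri_swap']
  · exact hm
  · simp

lemma diff_le {α β : Type*} [MeasurableSpace α] [MeasurableSpace β] (μ' : Measure α) (μ : Measure β)
    [IsFiniteMeasure μ'] (A B : Set α) (A' B' : Set β) (hB : MeasurableSet B)
    (hA1 : μ' A = μ A') (hB1 : μ' B = μ B') (h : μ' (A \ B) = 0 ∨ μ' (B \ A) = 0) :
    μ' (A \ B) ≤ μ (A' \ B') := by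
  rcases h with h | h
  · simp [h]
  have h1 : μ' A = μ' (A ∩ B) + μ' (A \ B) := (measure_inter_add_sdiff A hB).symm
  have h2 : μ' B ≤ μ' (A ∩ B) := by
    calc μ' B ≤ μ' ((A ∩ B) ∪ (B \ A)) := measure_mono (by intro x hx; by_cases hA : x ∈ A <;> simp [hx, hA])
      _ ≤ _ := measure_union_le _ _
      _ = _ := by rw [h, add_zero]
  have h3 : μ A' ≤ μ B' + μ (A' \ B') := by
    calc μ A' ≤ μ (B' ∪ (A' \ B')) := measure_mono (by intro x hx; by_cases hA : x ∈ B' <;> simp [hx, hA])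
      _ ≤ _ := measure_union_le _ _
  have h4 : μ' B + μ' (A \ B) ≤ μ' B + μ (A' \ B') := by
    calc _ ≤ μ' (A ∩ B) + μ' (A \ B) := by gcongr
      _ = μ A' := by rw [← h1, hA1]
      _ ≤ _ := by rw [hB1]; exact h3
  exact (ENNReal.add_le_add_iff_left (measure_ne_top _ _)).1 h4

lemma rearr0 (π' π : Measure (ℝ × ℝ)) [IsFiniteMeasure π'] [IsFiniteMeasure π]
    (h1 : π'.map Prod.fst = π.map Prod.fst) (h2 : π'.map Prod.snd = π.map Prod.snd)
    (h : ∀ s t : ℝ, π' {p | p.1 ≤ s ∧ t < p.2} = 0 ∨ π' {p | s < p.1 ∧ p.2 ≤ t} = 0) :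
    ∫⁻ p, ENNReal.ofReal ((p.1 - p.2) ^ 2) ∂π' ≤ ∫⁻ p, ENNReal.ofReal ((p.1 - p.2) ^ 2) ∂π := by
  have e1 : ∀ s, π' {p | p.1 ≤ s} = π {p | p.1 ≤ s} := fun s => by
    have := congrArg (fun m => m (Set.Iic s)) h1
    simp only [Measure.map_apply measurable_fst measurableSet_Iic] at this
    exact this
  have e2 : ∀ s, π' {p | p.2 ≤ s} = π {p | p.2 ≤ s} := fun s => by
    have := congrArg (fun m => m (Set.Iic s)) h2
    simp only [Measure.map_apply measurable_snd measurableSet_Iic] at this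
    exact this
  have m1 : ∀ s : ℝ, MeasurableSet {p : ℝ × ℝ | p.1 ≤ s} := fun s => measurable_fst measurableSet_Iic
  have m2 : ∀ s : ℝ, MeasurableSet {p : ℝ × ℝ | p.2 ≤ s} := fun s => measurable_snd measurableSet_Iic
  rw [sq_lint, sq_lint]
  refine mul_le_mul_right (add_le_add (lintegral_mono fun z => ?_) (lintegral_mono fun z => ?_)) _
  · by_cases hz : z.1 ≤ z.2
    · have := diff_le π' π {p | p.1 ≤ z.1} {p | p.2 ≤ z.2} {p | p.1 ≤ z.1} {p | p.2 ≤ z.2} (m2 _) (e1 _) (e2 _)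
        (by rcases h z.1 z.2 with h | h
            · left; convert h using 2; ext p; simp
            · right; convert h using 2; ext p; simp [and_comm])
      simpa [hz, Set.sdiff_eq, Set.ofPred_and, Set.compl_ofPred] using this
    · simp [hz]
  · by_cases hz : z.1 ≤ z.2
    · have := diff_le π' π {p | p.2 ≤ z.1} {p | p.1 ≤ z.2} {p | p.2 ≤ z.1} {p | p.1 ≤ z.2} (m1 _) (e2 _) (e1 _)
        (by rcases h z.2 z.1 with h | h
            · right; convert h using 2; ext p; simp
            · left; convert h using 2; ext p; simp [and_comm])
      simpa [hz, Set.sdiff_eq, Set.ofPred_and, Set.compl_ofPred] using this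
    · simp [hz]

lemma rearr {Ω : Type*} [MeasurableSpace Ω] (P : Measure Ω) (lam : Measure ℝ) [IsFiniteMeasure P]
    [IsFiniteMeasure lam]
    (U V : Ω → ℝ) (hU : AEMeasurable U P) (hV : AEMeasurable V P) (hUl : P.map U = lam) (hVl : P.map V = lam)
    (f g : ℝ → ℝ) (hf : AEMeasurable f lam) (hg : AEMeasurable g lam) (I : Set ℝ) (hI : ∀ᵐ u ∂lam, u ∈ I)
    (hfI : MonotoneOn f I) (hgI : MonotoneOn g I) :
    ∫⁻ u, ENNReal.ofReal ((f u - g u) ^ 2) ∂lam ≤ ∫⁻ w, ENNReal.ofReal ((f (V w) - g (U w)) ^ 2) ∂P := by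
  have hfV : AEMeasurable (fun w => f (V w)) P := by
    subst hVl; exact hf.comp_aemeasurable hV
  have hgU : AEMeasurable (fun w => g (U w)) P := by
    subst hUl; exact hg.comp_aemeasurable hU
  have hp : AEMeasurable (fun w => (f (V w), g (U w))) P := hfV.prodMk hgU
  have := rearr0 (lam.map (fun u => (f u, g u))) (P.map (fun w => (f (V w), g (U w)))) ?_ ?_ ?_
  · rwa [lintegral_map' (by fun_prop) (by fun_prop), lintegral_map' (by fun_prop) hp] at this
  · rw [AEMeasurable.map_map_of_aemeasurable (by fun_prop) (by fun_prop),
      AEMeasurable.map_map_of_aemeasurable (by fun_prop) hp]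
    change lam.map f = P.map (f ∘ V)
    rw [← AEMeasurable.map_map_of_aemeasurable (by rwa [hVl]) hV, hVl]
  · rw [AEMeasurable.map_map_of_aemeasurable (by fun_prop) (by fun_prop),
      AEMeasurable.map_map_of_aemeasurable (by fun_prop) hp]
    change lam.map g = P.map (g ∘ U)
    rw [← AEMeasurable.map_map_of_aemeasurable (by rwa [hUl]) hU, hUl]
  · intro s t
    have ms1 : MeasurableSet {p : ℝ × ℝ | p.1 ≤ s ∧ t < p.2} :=
      (measurable_fst measurableSet_Iic).inter (measurable_snd measurableSet_Ioi)
    have ms2 : MeasurableSet {p : ℝ × ℝ | s < p.1 ∧ p.2 ≤ t} :=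
      (measurable_fst measurableSet_Ioi).inter (measurable_snd measurableSet_Iic)
    rw [Measure.map_apply_of_aemeasurable (by fun_prop) ms1, Measure.map_apply_of_aemeasurable (by fun_prop) ms2]
    by_contra! hc
    have key : ∀ S : Set ℝ, lam S ≠ 0 → ∃ u ∈ S, u ∈ I := by
      intro S hS
      by_contra! hn
      apply hS
      refine measure_mono_null ?_ (ae_iff.1 hI)
      exact hn
    obtain ⟨u, ⟨hu1, hu2⟩, huI⟩ := key _ hc.1
    obtain ⟨v, ⟨hv1, hv2⟩, hvI⟩ := key _ hc.2
    simp only at hu1 hu2 hv1 hv2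
    rcases le_total u v with h | h
    · have := hgI huI hvI h; linarith
    · have := hfI hvI huI h; linarith
end

section
/-- uniform measure -/
def lam : Measure ℝ := volume.restrict (Set.Icc (0 : ℝ) 1)

instance : IsProbabilityMeasure lam := ⟨by simp [lam]⟩

lemma lam_ae : ∀ᵐ u ∂lam, u ∈ Set.Ioo (0 : ℝ) 1 := by
  unfold lam
  rw [← Measure.restrict_congr_set Ioo_ae_eq_Icc]
  exact ae_restrict_mem measurableSet_Ioo

lemma lam_eq : lam = volume.restrict (Set.Ioo (0 : ℝ) 1) := by
  unfold lam
  rw [← Measure.restrict_congr_set Ioo_ae_eq_Icc]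

lemma lam_Iic {x : ℝ} (_h0 : 0 ≤ x) (h1 : x ≤ 1) : lam (Set.Iic x) = ENNReal.ofReal x := by
  unfold lam
  rw [Measure.restrict_apply measurableSet_Iic]
  have : Set.Iic x ∩ Set.Icc 0 1 = Set.Icc 0 x := by
    ext t; simp only [Set.mem_inter_iff, Set.mem_Iic, Set.mem_Icc]
    constructor
    · rintro ⟨a, b, c⟩; exact ⟨b, a⟩
    · rintro ⟨a, b⟩; exact ⟨b, a, b.trans h1⟩
  rw [this]; simp

/-- cdf -/
def Fc (ν : Measure ℝ) (s : ℝ) : ℝ := (ν (Set.Iic s)).toReal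

lemma Fc_mono (ν : Measure ℝ) [IsFiniteMeasure ν] : Monotone (Fc ν) := fun _ _ h =>
  ENNReal.toReal_mono (measure_ne_top _ _) (measure_mono (Set.Iic_subset_Iic.2 h))

lemma Fc_meas (ν : Measure ℝ) [IsFiniteMeasure ν] : Measurable (Fc ν) := (Fc_mono ν).measurable

lemma Fc_eq_cdf (ν : Measure ℝ) [IsProbabilityMeasure ν] : Fc ν = cdf ν := by
  ext s; rw [cdf_eq_real]; rfl

lemma quantile_eq (ν : Measure ℝ) [IsProbabilityMeasure ν] (u : ℝ) : 
    quantile ν u = sInf {s | u ≤ Fc ν s} := by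
  unfold quantile Fc
  congr 1; ext s
  exact ENNReal.ofReal_le_iff_le_toReal (measure_ne_top _ _)

lemma quantile_le_iff (ν : Measure ℝ) [IsProbabilityMeasure ν] {u : ℝ} (hu : u ∈ Set.Ioo (0:ℝ) 1) (s : ℝ) :
    quantile ν u ≤ s ↔ u ≤ Fc ν s := by
  rw [quantile_eq]
  have hne : {s | u ≤ Fc ν s}.Nonempty := by
    have := (tendsto_cdf_atTop ν).eventually (lt_mem_nhds hu.2)
    obtain ⟨s, hs⟩ := this.exists
    exact ⟨s, by simpa [Fc_eq_cdf] using hs.le⟩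
  have hbdd : BddBelow {s | u ≤ Fc ν s} := by
    have := (tendsto_cdf_atBot ν).eventually (gt_mem_nhds hu.1)
    obtain ⟨s, hs⟩ := this.exists
    refine ⟨s, fun t ht => ?_⟩
    by_contra! h
    have := Fc_mono ν h.le
    rw [← Fc_eq_cdf] at hs
    have ht : u ≤ Fc ν t := ht
    linarith
  refine ⟨fun h => ?_, fun h => csInf_le hbdd h⟩
  refine le_trans ?_ (Fc_mono ν h)
  set q := sInf {s | u ≤ Fc ν s}
  have hc : ContinuousWithinAt (Fc ν) (Set.Ioi q) q := by
    rw [Fc_eq_cdf]; exact ((cdf ν).right_continuous q).mono Set.Ioi_subset_Ici_self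
  refine ge_of_tendsto hc ?_
  filter_upwards [self_mem_nhdsWithin] with t ht
  obtain ⟨s, hs, hst⟩ := exists_lt_of_csInf_lt hne ht
  exact le_trans hs (Fc_mono ν hst.le)

lemma quantile_mono (ν : Measure ℝ) [IsProbabilityMeasure ν] : MonotoneOn (quantile ν) (Set.Ioo 0 1) := by
  intro u hu v hv h
  rw [quantile_le_iff ν hu]
  exact h.trans ((quantile_le_iff ν hv _).1 le_rfl)

lemma aem_of_monoOn {f : ℝ → ℝ} (hf : MonotoneOn f (Set.Ioo 0 1)) : AEMeasurable f lam := by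
  rw [lam_eq]
  exact aemeasurable_restrict_of_monotoneOn measurableSet_Ioo hf

lemma quantile_aem (ν : Measure ℝ) [IsProbabilityMeasure ν] : AEMeasurable (quantile ν) lam :=
  aem_of_monoOn (quantile_mono ν)

lemma map_quantile (ν : Measure ℝ) [IsProbabilityMeasure ν] : lam.map (quantile ν) = ν := by
  have := quantile_aem ν
  have : IsProbabilityMeasure (lam.map (quantile ν)) := Measure.isProbabilityMeasure_map this
  refine Measure.ext_of_Iic _ _ fun s => ?_
  rw [Measure.map_apply_of_aemeasurable (quantile_aem ν) measurableSet_Iic]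
  have : (quantile ν ⁻¹' Set.Iic s : Set ℝ) =ᵐ[lam] Set.Iic (Fc ν s) := by
    filter_upwards [lam_ae] with u hu
    exact propext (quantile_le_iff ν hu s)
  rw [measure_congr this, lam_Iic (x := Fc ν s) ENNReal.toReal_nonneg, Fc, ENNReal.ofReal_toReal (measure_ne_top _ _)]
  exact ENNReal.toReal_le_of_le_ofReal zero_le_one (by simpa using prob_le_one)

lemma Fc_quantile (ν : Measure ℝ) [IsProbabilityMeasure ν] (ha : ∀ s, ν {s} = 0) {u : ℝ} (hu : u ∈ Set.Ioo (0:ℝ) 1) :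
    Fc ν (quantile ν u) = u := by
  refine le_antisymm ?_ ((quantile_le_iff ν hu _).1 le_rfl)
  have : NullSingletonClass ν := ⟨ha⟩
  have hcont : ContinuousWithinAt (Fc ν) (Set.Iio (quantile ν u)) (quantile ν u) := by
    have : Continuous (cdf ν) := by
      rw [continuous_iff_continuousAt]
      intro x
      rw [(cdf ν).mono.continuousAt_iff_leftLim_eq_rightLim, StieltjesFunction.rightLim_eq]
      have := StieltjesFunction.measure_singleton (cdf ν) x
      rw [measure_cdf, ha] at this
      have h1 := ENNReal.ofReal_eq_zero.1 this.symm
      have h2 := (cdf ν).mono.leftLim_le (le_refl x)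
      linarith
    rw [Fc_eq_cdf]; exact this.continuousWithinAt
  refine le_of_tendsto hcont ?_
  filter_upwards [self_mem_nhdsWithin] with t ht
  by_contra! h
  exact absurd ((quantile_le_iff ν hu t).2 h.le) (not_le.2 ht)

lemma quantile_strict (ν : Measure ℝ) [IsProbabilityMeasure ν] (ha : ∀ s, ν {s} = 0) :
    StrictMonoOn (quantile ν) (Set.Ioo 0 1) := by
  intro u hu v hv h
  refine lt_of_le_of_ne (quantile_mono ν hu hv h.le) fun he => ?_
  have := Fc_quantile ν ha hu
  rw [he, Fc_quantile ν ha hv] at this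
  exact h.ne' this

lemma gen_map {f G : ℝ → ℝ} (hf : AEMeasurable f lam) (hG : Measurable G)
    (h : ∀ u ∈ Set.Ioo (0:ℝ) 1, G (f u) = u) : (lam.map f).map G = lam := by
  rw [AEMeasurable.map_map_of_aemeasurable hG.aemeasurable hf]
  conv_rhs => rw [← Measure.map_id (μ := lam)]
  refine Measure.map_congr ?_
  filter_upwards [lam_ae] with u hu
  exact h u hu

lemma gen_inv {f G : ℝ → ℝ} (hf : AEMeasurable f lam) (hG : Measurable G)
    (h : ∀ u ∈ Set.Ioo (0:ℝ) 1, G (f u) = u) : ∀ᵐ s ∂(lam.map f), G s ∈ Set.Ioo (0:ℝ) 1 ∧ f (G s) = s := by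
  have h0 := gen_map hf hG h
  obtain ⟨f', hf', hff⟩ := id hf
  have h1 : ∀ᵐ s ∂(lam.map f), f (G s) = f' (G s) := by
    rw [← h0] at hff
    exact ae_of_ae_map hG.aemeasurable hff
  have h2 : ∀ᵐ s ∂(lam.map f), f' (G s) = s := by
    refine (ae_map_iff hf (measurableSet_eq_fun (hf'.comp hG) measurable_id)).2 ?_
    filter_upwards [hff, lam_ae] with u hu hu'
    change f' (G (f u)) = f u
    rw [h u hu', hu]
  have h3 : ∀ᵐ s ∂(lam.map f), G s ∈ Set.Ioo (0:ℝ) 1 := by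
    have := lam_ae
    rw [← h0] at this
    exact ae_of_ae_map hG.aemeasurable this
  filter_upwards [h1, h2, h3] with s a b c
  exact ⟨c, a.trans b⟩

lemma gen_cdf {f : ℝ → ℝ} (hf : StrictMonoOn f (Set.Ioo 0 1)) {u : ℝ} (hu : u ∈ Set.Ioo (0:ℝ) 1) :
    Fc (lam.map f) (f u) = u := by
  unfold Fc
  rw [Measure.map_apply_of_aemeasurable (aem_of_monoOn hf.monotoneOn) measurableSet_Iic]
  have : (f ⁻¹' Set.Iic (f u) : Set ℝ) =ᵐ[lam] Set.Iic u := by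
    filter_upwards [lam_ae] with v hv
    exact propext (hf.le_iff_le hv hu)
  rw [measure_congr this, lam_Iic hu.1.le hu.2.le, ENNReal.toReal_ofReal hu.1.le]

lemma map_Fc (ν : Measure ℝ) [IsProbabilityMeasure ν] (ha : ∀ s, ν {s} = 0) : ν.map (Fc ν) = lam := by
  have := gen_map (quantile_aem ν) (Fc_meas ν) (fun u hu => Fc_quantile ν ha hu)
  rwa [map_quantile] at this

lemma ae_Fc (ν : Measure ℝ) [IsProbabilityMeasure ν] (ha : ∀ s, ν {s} = 0) :
    ∀ᵐ s ∂ν, Fc ν s ∈ Set.Ioo (0:ℝ) 1 ∧ quantile ν (Fc ν s) = s := by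
  have := gen_inv (quantile_aem ν) (Fc_meas ν) (fun u hu => Fc_quantile ν ha hu)
  rwa [map_quantile] at this
end

section
variable {d : ℕ} {θ : Euc d} {μ μ1 μ2 : Measure (Euc d)}

lemma law_comp {A B C : Type*} [MeasurableSpace A] [MeasurableSpace B] [MeasurableSpace C]
    {π : Measure A} {ν : Measure B} {l : Measure C} {f : A → B} {g : B → C} (hf : Measurable f) (hg : Measurable g)
    (h1 : π.map f = ν) (h2 : ν.map g = l) : π.map (fun a => g (f a)) = l := by
  subst h1; subst h2
  exact (Measure.map_map hg hf).symm

lemma law_ae {A B : Type*} [MeasurableSpace A] [MeasurableSpace B]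
    {π : Measure A} {ν : Measure B} {f : A → B} (hf : Measurable f)
    (h1 : π.map f = ν) {p : B → Prop} (h : ∀ᵐ b ∂ν, p b) : ∀ᵐ a ∂π, p (f a) := by
  subst h1; exact ae_of_ae_map hf.aemeasurable h

/-- wrapper -/
structure InP (θ : Euc d) (μ : Measure (Euc d)) : Prop where
  mem : μ ∈ P2a θ

lemma int_sq {A : Type*} [MeasurableSpace A] {P : Measure A} {f g : A → ℝ} (hf : MemLp f 2 P) (hg : MemLp g 2 P) :
    Integrable (fun x => (f x - g x) ^ 2) P := (hf.sub hg).integrable_sq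

lemma InP.prob (h : InP θ μ) : IsProbabilityMeasure μ := h.1.1.1

lemma inner_meas (θ : Euc d) : Measurable (fun x : Euc d => ⟪θ, x⟫) := by fun_prop

lemma InP.probL (h : InP θ μ) : IsProbabilityMeasure (projLine θ μ) := by
  have := h.prob
  exact Measure.isProbabilityMeasure_map (inner_meas θ).aemeasurable

/-- rank variable -/
def Ur (θ : Euc d) (μ : Measure (Euc d)) (x : Euc d) : ℝ := Fc (projLine θ μ) ⟪θ, x⟫

/-- quantile shorthand -/
def qq (θ : Euc d) (μ : Measure (Euc d)) : ℝ → ℝ := quantile (projLine θ μ)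

lemma InP.Ur_meas (h : InP θ μ) : Measurable (Ur θ μ) := by
  have := h.probL
  exact (Fc_meas _).comp (inner_meas θ)

lemma InP.Ur_map (h : InP θ μ) : μ.map (Ur θ μ) = lam := by
  have := h.probL
  exact law_comp (g := Fc (projLine θ μ)) (inner_meas θ) (Fc_meas (projLine θ μ)) rfl (map_Fc _ h.1.2)

lemma InP.Ur_ae (h : InP θ μ) : ∀ᵐ x ∂μ, Ur θ μ x ∈ Set.Ioo (0:ℝ) 1 ∧ qq θ μ (Ur θ μ x) = ⟪θ, x⟫ := by
  have := h.probL
  exact law_ae (inner_meas θ) rfl (ae_Fc (projLine θ μ) h.1.2)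

lemma InP.qq_mono (h : InP θ μ) : StrictMonoOn (qq θ μ) (Set.Ioo 0 1) := by
  have := h.probL
  exact quantile_strict _ h.1.2

lemma InP.qq_aem (h : InP θ μ) : AEMeasurable (qq θ μ) lam := aem_of_monoOn h.qq_mono.monotoneOn

lemma InP.memLp_id (h : InP θ μ) : MemLp (fun x : Euc d => x) 2 μ :=
  (memLp_two_iff_integrable_sq_norm (by fun_prop)).2 h.1.1.2

lemma InP.memLp_inner (h : InP θ μ) : MemLp (fun x : Euc d => ⟪θ, x⟫) 2 μ :=
  h.memLp_id.const_inner θ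

lemma InP.qq_memLp (h : InP θ μ) : MemLp (qq θ μ) 2 lam := by
  have := h.probL
  have h1 : MemLp (fun x : ℝ => x) 2 (projLine θ μ) := by
    rw [projLine, memLp_map_measure_iff (by fun_prop) (inner_meas θ).aemeasurable]
    exact h.memLp_inner
  rw [← map_quantile (projLine θ μ), memLp_map_measure_iff (by fun_prop) (quantile_aem _)] at h1
  exact h1

lemma memLp_law {Ω : Type*} [MeasurableSpace Ω] {P : Measure Ω} {X : Ω → ℝ} (hX : AEMeasurable X P)
    (h : P.map X = lam) {q : ℝ → ℝ} (hq : MemLp q 2 lam) : MemLp (fun w => q (X w)) 2 P := by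
  rw [← h] at hq
  exact (memLp_map_measure_iff hq.1 hX).1 hq

lemma integral_law {Ω : Type*} [MeasurableSpace Ω] {P : Measure Ω} {X : Ω → ℝ} (hX : AEMeasurable X P)
    (h : P.map X = lam) {q : ℝ → ℝ} (hq : AEStronglyMeasurable q lam) : ∫ w, q (X w) ∂P = ∫ u, q u ∂lam := by
  rw [← h] at hq ⊢
  exact (integral_map hX hq).symm

/-- middle function -/
def mid (θ : Euc d) (μ1 μ2 : Measure (Euc d)) (u : ℝ) : ℝ := (1/2) * qq θ μ1 u + (1/2) * qq θ μ2 u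

lemma mid_mono (h1 : InP θ μ1) (h2 : InP θ μ2) : StrictMonoOn (mid θ μ1 μ2) (Set.Ioo 0 1) := by
  intro u hu v hv h
  have a := h1.qq_mono hu hv h
  have b := h2.qq_mono hu hv h
  unfold mid; linarith

lemma mid_aem (h1 : InP θ μ1) (h2 : InP θ μ2) : AEMeasurable (mid θ μ1 μ2) lam :=
  aem_of_monoOn (mid_mono h1 h2).monotoneOn

lemma smul_meas (θ : Euc d) : Measurable (fun s : ℝ => s • θ) := by fun_prop

lemma pm_eq' : pivotMiddle θ μ1 μ2 = lam.map (fun u => mid θ μ1 μ2 u • θ) := rfl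

lemma smid_aem (h1 : InP θ μ1) (h2 : InP θ μ2) : AEMeasurable (fun u => mid θ μ1 μ2 u • θ) lam :=
  (smul_meas θ).comp_aemeasurable (mid_aem h1 h2)

lemma pm_eq (h1 : InP θ μ1) (h2 : InP θ μ2) :
    pivotMiddle θ μ1 μ2 = (lam.map (mid θ μ1 μ2)).map (fun s => s • θ) := by
  rw [pm_eq', AEMeasurable.map_map_of_aemeasurable (smul_meas θ).aemeasurable (mid_aem h1 h2)]
  rfl

lemma pm_symm : pivotMiddle θ μ1 μ2 = pivotMiddle θ μ2 μ1 := by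
  unfold pivotMiddle; simp_rw [add_comm]

/-- rank variable of the middle -/
def Vr (θ : Euc d) (μ1 μ2 : Measure (Euc d)) (y : Euc d) : ℝ := Fc (lam.map (mid θ μ1 μ2)) ⟪θ, y⟫

lemma Vr_symm : Vr θ μ1 μ2 = Vr θ μ2 μ1 := by
  have : mid θ μ1 μ2 = mid θ μ2 μ1 := by ext u; unfold mid; rw [add_comm]
  unfold Vr; rw [this]

lemma Vr_mid (hθ : ‖θ‖ = 1) (h1 : InP θ μ1) (h2 : InP θ μ2) {u : ℝ} (hu : u ∈ Set.Ioo (0:ℝ) 1) :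
    Vr θ μ1 μ2 (mid θ μ1 μ2 u • θ) = u := by
  unfold Vr
  rw [real_inner_smul_right, real_inner_self_eq_norm_sq, hθ]
  simpa using gen_cdf (mid_mono h1 h2) hu

lemma Vr_meas (h1 : InP θ μ1) (h2 : InP θ μ2) : Measurable (Vr θ μ1 μ2) := by
  have : IsProbabilityMeasure (lam.map (mid θ μ1 μ2)) := Measure.isProbabilityMeasure_map (mid_aem h1 h2)
  exact (Fc_meas _).comp (inner_meas θ)

lemma Vr_map (hθ : ‖θ‖ = 1) (h1 : InP θ μ1) (h2 : InP θ μ2) :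
    (pivotMiddle θ μ1 μ2).map (Vr θ μ1 μ2) = lam := by
  rw [pm_eq', AEMeasurable.map_map_of_aemeasurable (Vr_meas h1 h2).aemeasurable
    (smid_aem h1 h2)]
  conv_rhs => rw [← Measure.map_id (μ := lam)]
  refine Measure.map_congr ?_
  filter_upwards [lam_ae] with u hu
  exact Vr_mid hθ h1 h2 hu

lemma Vr_ae (hθ : ‖θ‖ = 1) (h1 : InP θ μ1) (h2 : InP θ μ2) :
    ∀ᵐ y ∂(pivotMiddle θ μ1 μ2), Vr θ μ1 μ2 y ∈ Set.Ioo (0:ℝ) 1 ∧ mid θ μ1 μ2 (Vr θ μ1 μ2 y) • θ = y := by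
  have : IsProbabilityMeasure (lam.map (mid θ μ1 μ2)) := Measure.isProbabilityMeasure_map (mid_aem h1 h2)
  have key := gen_inv (mid_aem h1 h2) (Fc_meas _) (fun u hu => gen_cdf (mid_mono h1 h2) hu)
  have a : ∀ᵐ y ∂(pivotMiddle θ μ1 μ2), Fc (lam.map (mid θ μ1 μ2)) ⟪θ, y⟫ ∈ Set.Ioo (0:ℝ) 1 ∧
      mid θ μ1 μ2 (Fc (lam.map (mid θ μ1 μ2)) ⟪θ, y⟫) = ⟪θ, y⟫ := by
    have : (pivotMiddle θ μ1 μ2).map (fun y => ⟪θ, y⟫) = lam.map (mid θ μ1 μ2) := by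
      rw [pm_eq h1 h2, Measure.map_map (inner_meas θ) (smul_meas θ)]
      convert Measure.map_id
      ext s
      simp [real_inner_smul_right, hθ]
    exact law_ae (inner_meas θ) this key
  have b : ∀ᵐ y ∂(pivotMiddle θ μ1 μ2), ⟪θ, y⟫ • θ = y := by
    rw [pm_eq h1 h2]
    refine (ae_map_iff (smul_meas θ).aemeasurable (measurableSet_eq_fun (by fun_prop) (by fun_prop))).2 ?_
    refine ae_of_all _ fun s => ?_
    simp [real_inner_smul_right, hθ]
  filter_upwards [a, b] with y ha hb
  exact ⟨ha.1, by unfold Vr; rw [ha.2, hb]⟩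

lemma pm_prob (h1 : InP θ μ1) (h2 : InP θ μ2) : IsProbabilityMeasure (pivotMiddle θ μ1 μ2) :=
  Measure.isProbabilityMeasure_map (μ := lam) (smid_aem h1 h2)

lemma pm_P2 (hθ : ‖θ‖ = 1) (h1 : InP θ μ1) (h2 : InP θ μ2) : MemLp (fun x : Euc d => x) 2 (pivotMiddle θ μ1 μ2) := by
  rw [pm_eq', memLp_map_measure_iff (by fun_prop) (smid_aem h1 h2)]
  have : MemLp (mid θ μ1 μ2) 2 lam := (h1.qq_memLp.const_mul _).add (h2.qq_memLp.const_mul _)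
  refine MemLp.of_le (g := mid θ μ1 μ2) this ?_ ?_
  · exact (smid_aem h1 h2).aestronglyMeasurable
  · refine ae_of_all _ fun u => ?_
    simp [norm_smul, hθ]

/-- constants -/
def Dc (θ : Euc d) (μ1 μ2 : Measure (Euc d)) : ℝ := ∫ u, (qq θ μ2 u - qq θ μ1 u) ^ 2 ∂lam

def Rc (θ : Euc d) (μ : Measure (Euc d)) : ℝ := ∫ x, (‖x‖ ^ 2 - ⟪θ, x⟫ ^ 2) ∂μ

section plan
variable {π : Measure (Euc d × Euc d)}

lemma plan_cost (hθ : ‖θ‖ = 1) (h1 : InP θ μ1) (h2 : InP θ μ2)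
    (hπ : π ∈ Coupling (pivotMiddle θ μ1 μ2) μ1) :
    tCost π = (1/2) * (∫ p, (qq θ μ1 (Vr θ μ1 μ2 p.1) - qq θ μ1 (Ur θ μ1 p.2)) ^ 2 ∂π)
      + (1/2) * (∫ p, (qq θ μ2 (Vr θ μ1 μ2 p.1) - qq θ μ1 (Ur θ μ1 p.2)) ^ 2 ∂π)
      - (1/4) * Dc θ μ1 μ2 + Rc θ μ1 := by
  obtain ⟨hp, hf, hs⟩ := hπ
  have mV : Measurable (fun p : Euc d × Euc d => Vr θ μ1 μ2 p.1) := (Vr_meas h1 h2).comp measurable_fst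
  have mU : Measurable (fun p : Euc d × Euc d => Ur θ μ1 p.2) := h1.Ur_meas.comp measurable_snd
  have lV : π.map (fun p => Vr θ μ1 μ2 p.1) = lam := by
    exact law_comp measurable_fst (Vr_meas h1 h2) hf (Vr_map hθ h1 h2)
  have lU : π.map (fun p => Ur θ μ1 p.2) = lam := by
    exact law_comp measurable_snd h1.Ur_meas hs h1.Ur_map
  have a1 := memLp_law mV.aemeasurable lV h1.qq_memLp
  have a2 := memLp_law mV.aemeasurable lV h2.qq_memLp
  have a3 := memLp_law mU.aemeasurable lU h1.qq_memLp
  have i1 := (int_sq a1 a3)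
  have i2 := (int_sq a2 a3)
  have i3 := (int_sq a2 a1)
  have i4 : Integrable (fun x : Euc d => ‖x‖ ^ 2 - ⟪θ, x⟫ ^ 2) μ1 := h1.1.1.2.sub h1.memLp_inner.integrable_sq
  have i4' : Integrable (fun p : Euc d × Euc d => ‖p.2‖ ^ 2 - ⟪θ, p.2⟫ ^ 2) π := by
    rw [← hs] at i4
    exact (integrable_map_measure i4.1 measurable_snd.aemeasurable).1 i4
  have e3 : Dc θ μ1 μ2 = ∫ p, (qq θ μ2 (Vr θ μ1 μ2 p.1) - qq θ μ1 (Vr θ μ1 μ2 p.1)) ^ 2 ∂π := by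
    exact (integral_law mV.aemeasurable lV (q := fun u => (qq θ μ2 u - qq θ μ1 u) ^ 2)
      (int_sq h2.qq_memLp h1.qq_memLp).1).symm
  have e4 : Rc θ μ1 = ∫ p, (‖p.2‖ ^ 2 - ⟪θ, p.2⟫ ^ 2) ∂π := by
    unfold Rc
    have := integral_map (μ := π) measurable_snd.aemeasurable (f := fun x : Euc d => ‖x‖ ^ 2 - ⟪θ, x⟫ ^ 2)
      (by rw [hs]; exact i4.1)
    rw [hs] at this
    exact this
  rw [e3, e4, ← integral_const_mul, ← integral_const_mul, ← integral_const_mul]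
  have j1 := i1.const_mul (1/2)
  have j2 := i2.const_mul (1/2)
  have j3 := i3.const_mul (1/4)
  have j12 := j1.add j2
  have j123 := j12.sub j3
  simp only [Pi.add_def, Pi.sub_def] at j12 j123
  rw [← integral_add j1 j2, ← integral_sub j12 j3, ← integral_add j123 i4']
  unfold tCost
  have ay : ∀ᵐ p ∂π, mid θ μ1 μ2 (Vr θ μ1 μ2 p.1) • θ = p.1 := by
    exact (law_ae measurable_fst hf (Vr_ae hθ h1 h2)).mono fun p hp => hp.2
  have ax : ∀ᵐ p ∂π, qq θ μ1 (Ur θ μ1 p.2) = ⟪θ, p.2⟫ := by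
    exact (law_ae measurable_snd hs h1.Ur_ae).mono fun p hp => hp.2
  refine integral_congr_ae ?_
  filter_upwards [ay, ax] with p hy hx
  rw [hx]
  have : ‖p.1 - p.2‖ ^ 2 = (mid θ μ1 μ2 (Vr θ μ1 μ2 p.1) - ⟪θ, p.2⟫) ^ 2 + (‖p.2‖ ^ 2 - ⟪θ, p.2⟫ ^ 2) := by
    conv_lhs => rw [← hy]
    rw [norm_sub_sq_real, norm_smul, hθ, real_inner_smul_left, mul_one, Real.norm_eq_abs, sq_abs]
    ring
  rw [this, mid]
  ring

lemma plan_rearr (hθ : ‖θ‖ = 1) (h1 : InP θ μ1) (h2 : InP θ μ2)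
    (hπ : π ∈ Coupling (pivotMiddle θ μ1 μ2) μ1) :
    Dc θ μ1 μ2 ≤ ∫ p, (qq θ μ2 (Vr θ μ1 μ2 p.1) - qq θ μ1 (Ur θ μ1 p.2)) ^ 2 ∂π := by
  obtain ⟨hp, hf, hs⟩ := hπ
  have mV : Measurable (fun p : Euc d × Euc d => Vr θ μ1 μ2 p.1) := (Vr_meas h1 h2).comp measurable_fst
  have mU : Measurable (fun p : Euc d × Euc d => Ur θ μ1 p.2) := h1.Ur_meas.comp measurable_snd
  have lV : π.map (fun p => Vr θ μ1 μ2 p.1) = lam := by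
    exact law_comp measurable_fst (Vr_meas h1 h2) hf (Vr_map hθ h1 h2)
  have lU : π.map (fun p => Ur θ μ1 p.2) = lam := by
    exact law_comp measurable_snd h1.Ur_meas hs h1.Ur_map
  have a2 := memLp_law mV.aemeasurable lV h2.qq_memLp
  have a3 := memLp_law mU.aemeasurable lU h1.qq_memLp
  have i2 := (int_sq a2 a3)
  have := rearr π lam _ _ mU.aemeasurable mV.aemeasurable lU lV (qq θ μ2) (qq θ μ1) h2.qq_aem h1.qq_aem
    _ lam_ae h2.qq_mono.monotoneOn h1.qq_mono.monotoneOn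
  rw [← ofReal_integral_eq_lintegral_ofReal (int_sq h2.qq_memLp h1.qq_memLp)
      (ae_of_all _ fun _ => sq_nonneg _),
    ← ofReal_integral_eq_lintegral_ofReal i2 (ae_of_all _ fun _ => sq_nonneg _)] at this
  exact (ENNReal.ofReal_le_ofReal_iff (integral_nonneg fun _ => sq_nonneg _)).1 this

lemma plan_eq (hθ : ‖θ‖ = 1) (h1 : InP θ μ1) (h2 : InP θ μ2)
    (hπ : π ∈ Coupling (pivotMiddle θ μ1 μ2) μ1)
    (h : ∀ᵐ p ∂π, Vr θ μ1 μ2 p.1 = Ur θ μ1 p.2) :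
    tCost π = (1/4) * Dc θ μ1 μ2 + Rc θ μ1 := by
  rw [plan_cost hθ h1 h2 hπ]
  obtain ⟨hp, hf, hs⟩ := hπ
  have lV : π.map (fun p => Vr θ μ1 μ2 p.1) = lam := by
    exact law_comp measurable_fst (Vr_meas h1 h2) hf (Vr_map hθ h1 h2)
  have mV : Measurable (fun p : Euc d × Euc d => Vr θ μ1 μ2 p.1) := (Vr_meas h1 h2).comp measurable_fst
  have e3 : Dc θ μ1 μ2 = ∫ p, (qq θ μ2 (Vr θ μ1 μ2 p.1) - qq θ μ1 (Ur θ μ1 p.2)) ^ 2 ∂π := by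
    rw [Dc, ← integral_law mV.aemeasurable lV (q := fun u => (qq θ μ2 u - qq θ μ1 u) ^ 2)
      (int_sq h2.qq_memLp h1.qq_memLp).1]
    refine integral_congr_ae ?_
    filter_upwards [h] with p hp
    rw [hp]
  have e1 : ∫ p, (qq θ μ1 (Vr θ μ1 μ2 p.1) - qq θ μ1 (Ur θ μ1 p.2)) ^ 2 ∂π = 0 := by
    refine integral_eq_zero_of_ae ?_
    filter_upwards [h] with p hp
    simp [hp]
  rw [e1, ← e3]; ring

lemma W2sq_eq (hθ : ‖θ‖ = 1) (h1 : InP θ μ1) (h2 : InP θ μ2) :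
    W2sq (pivotMiddle θ μ1 μ2) μ1 = (1/4) * Dc θ μ1 μ2 + Rc θ μ1 := by
  have := h1.prob
  have hm : AEMeasurable (fun x => mid θ μ1 μ2 (Ur θ μ1 x) • θ) μ1 := by
    refine (smul_meas θ).comp_aemeasurable ?_
    refine AEMeasurable.comp_aemeasurable (g := mid θ μ1 μ2) ?_ h1.Ur_meas.aemeasurable
    rw [h1.Ur_map]; exact mid_aem h1 h2
  have hm2 : AEMeasurable (fun x => (mid θ μ1 μ2 (Ur θ μ1 x) • θ, x)) μ1 := hm.prodMk aemeasurable_id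
  have hc : μ1.map (fun x => (mid θ μ1 μ2 (Ur θ μ1 x) • θ, x)) ∈ Coupling (pivotMiddle θ μ1 μ2) μ1 := by
    refine ⟨Measure.isProbabilityMeasure_map hm2, ?_, ?_⟩
    · rw [AEMeasurable.map_map_of_aemeasurable (by fun_prop) hm2, pm_eq']
      have : μ1.map ((fun u => mid θ μ1 μ2 u • θ) ∘ Ur θ μ1) = _ := (AEMeasurable.map_map_of_aemeasurable
        (by rw [h1.Ur_map]; exact (smul_meas θ).comp_aemeasurable (mid_aem h1 h2)) h1.Ur_meas.aemeasurable).symm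
      rw [h1.Ur_map] at this
      exact this
    · rw [AEMeasurable.map_map_of_aemeasurable (by fun_prop) hm2]
      exact Measure.map_id
  have hcost := plan_eq hθ h1 h2 hc (by
    refine (ae_map_iff hm2 (measurableSet_eq_fun ((Vr_meas h1 h2).comp measurable_fst)
      (h1.Ur_meas.comp measurable_snd))).2 ?_
    filter_upwards [h1.Ur_ae] with x hx
    exact Vr_mid hθ h1 h2 hx.1)
  refine IsLeast.csInf_eq ⟨⟨_, hc, hcost⟩, ?_⟩
  rintro _ ⟨π, hπ, rfl⟩
  rw [plan_cost hθ h1 h2 hπ]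
  have a := plan_rearr hθ h1 h2 hπ
  have b : 0 ≤ ∫ p, (qq θ μ1 (Vr θ μ1 μ2 p.1) - qq θ μ1 (Ur θ μ1 p.2)) ^ 2 ∂π :=
    integral_nonneg fun _ => sq_nonneg _
  linarith

lemma opt_iff (hθ : ‖θ‖ = 1) (h1 : InP θ μ1) (h2 : InP θ μ2) :
    π ∈ OptPlan (pivotMiddle θ μ1 μ2) μ1 ↔ π ∈ Coupling (pivotMiddle θ μ1 μ2) μ1 ∧
      ∀ᵐ p ∂π, Vr θ μ1 μ2 p.1 = Ur θ μ1 p.2 := by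
  refine ⟨fun ⟨hπ, h⟩ => ⟨hπ, ?_⟩, fun ⟨hπ, h⟩ => ⟨hπ, ?_⟩⟩
  · rw [W2sq_eq hθ h1 h2, plan_cost hθ h1 h2 hπ] at h
    have a := plan_rearr hθ h1 h2 hπ
    have b : 0 ≤ ∫ p, (qq θ μ1 (Vr θ μ1 μ2 p.1) - qq θ μ1 (Ur θ μ1 p.2)) ^ 2 ∂π :=
      integral_nonneg fun _ => sq_nonneg _
    have c : ∫ p, (qq θ μ1 (Vr θ μ1 μ2 p.1) - qq θ μ1 (Ur θ μ1 p.2)) ^ 2 ∂π = 0 := by linarith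
    obtain ⟨hp, hf, hs⟩ := hπ
    have mV : Measurable (fun p : Euc d × Euc d => Vr θ μ1 μ2 p.1) := (Vr_meas h1 h2).comp measurable_fst
    have mU : Measurable (fun p : Euc d × Euc d => Ur θ μ1 p.2) := h1.Ur_meas.comp measurable_snd
    have lV : π.map (fun p => Vr θ μ1 μ2 p.1) = lam := by
      exact law_comp measurable_fst (Vr_meas h1 h2) hf (Vr_map hθ h1 h2)
    have lU : π.map (fun p => Ur θ μ1 p.2) = lam := by
      exact law_comp measurable_snd h1.Ur_meas hs h1.Ur_map
    have a1 := memLp_law mV.aemeasurable lV h1.qq_memLp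
    have a3 := memLp_law mU.aemeasurable lU h1.qq_memLp
    have i1 := (int_sq a1 a3)
    have z := (integral_eq_zero_iff_of_nonneg (fun _ => sq_nonneg _) i1).1 c
    have vI : ∀ᵐ p ∂π, Vr θ μ1 μ2 p.1 ∈ Set.Ioo (0:ℝ) 1 := by
      have := lam_ae; rw [← lV] at this; exact ae_of_ae_map mV.aemeasurable this
    have uI : ∀ᵐ p ∂π, Ur θ μ1 p.2 ∈ Set.Ioo (0:ℝ) 1 := by
      have := lam_ae; rw [← lU] at this; exact ae_of_ae_map mU.aemeasurable this
    filter_upwards [z, vI, uI] with p hz hv hu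
    refine h1.qq_mono.injOn hv hu ?_
    have hz : (qq θ μ1 (Vr θ μ1 μ2 p.1) - qq θ μ1 (Ur θ μ1 p.2)) ^ 2 = 0 := hz
    exact sub_eq_zero.1 (pow_eq_zero_iff (two_ne_zero) |>.1 hz)
  · rw [W2sq_eq hθ h1 h2, plan_eq hθ h1 h2 hπ h]
end plan
end

section
lemma glue {A B C : Type*} [MeasurableSpace A] [MeasurableSpace B] [MeasurableSpace C]
    [StandardBorelSpace C] [Nonempty C] (α : Measure (A × B)) (β : Measure (B × C))
    [IsProbabilityMeasure α] [IsProbabilityMeasure β] (h : α.map Prod.snd = β.map Prod.fst) :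
    ∃ γ : Measure ((A × B) × C), IsProbabilityMeasure γ ∧ γ.map Prod.fst = α ∧
      γ.map (fun p => (p.1.2, p.2)) = β := by
  let κ : Kernel (A × B) C := β.condKernel.comap Prod.snd measurable_snd
  refine ⟨α ⊗ₘ κ, inferInstance, ?_, ?_⟩
  · exact Measure.fst_compProd α κ
  · ext s hs
    have hf : Measurable (fun p : (A × B) × C => (p.1.2, p.2)) := by fun_prop
    rw [Measure.map_apply hf hs, Measure.compProd_apply (hf hs)]
    conv_rhs => rw [← β.disintegrate β.condKernel, Measure.compProd_apply hs, Measure.fst, ← h,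
      lintegral_map (Kernel.measurable_kernel_prodMk_left hs) measurable_snd]
    rfl

variable {d : ℕ} {θ : Euc d} {μ μ1 μ2 μ3 : Measure (Euc d)}

/-- comonotone couplings -/
def Om (θ : Euc d) (μ1 μ2 : Measure (Euc d)) : Set (Measure (Euc d × Euc d)) :=
  {ω | ω ∈ Coupling μ1 μ2 ∧ ∀ᵐ p ∂ω, Ur θ μ1 p.1 = Ur θ μ2 p.2}

lemma PSsq_eq (hθ : ‖θ‖ = 1) (h1 : InP θ μ1) (h2 : InP θ μ2) :
    PSsq θ μ1 μ2 = sInf (tCost '' Om θ μ1 μ2) := by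
  unfold PSsq Wnusq
  congr 1
  have g1 : Measurable (fun p : Euc d × Euc d × Euc d => (p.1, p.2.1)) := by fun_prop
  have g2 : Measurable (fun p : Euc d × Euc d × Euc d => (p.1, p.2.2)) := by fun_prop
  apply Set.Subset.antisymm
  · rintro _ ⟨ρ, ⟨hp, ho1, ho2⟩, rfl⟩
    rw [opt_iff hθ h1 h2] at ho1
    rw [pm_symm, opt_iff hθ h2 h1] at ho2
    obtain ⟨⟨-, -, c1⟩, e1⟩ := ho1
    obtain ⟨⟨-, -, c2⟩, e2⟩ := ho2
    rw [Measure.map_map measurable_snd g1] at c1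
    rw [Measure.map_map measurable_snd g2] at c2
    have e1 := ae_of_ae_map g1.aemeasurable e1
    have e2 := ae_of_ae_map g2.aemeasurable e2
    refine ⟨ρ.map Prod.snd, ⟨⟨Measure.isProbabilityMeasure_map (by fun_prop), ?_, ?_⟩, ?_⟩, ?_⟩
    · rw [Measure.map_map (by fun_prop) (by fun_prop)]; exact c1
    · rw [Measure.map_map (by fun_prop) (by fun_prop)]; exact c2
    · refine (ae_map_iff measurable_snd.aemeasurable (measurableSet_eq_fun (h1.Ur_meas.comp measurable_fst)
        (h2.Ur_meas.comp measurable_snd))).2 ?_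
      filter_upwards [e1, e2] with p a b
      rw [Vr_symm] at b
      exact a.symm.trans b
    · unfold tCost pivotCost
      rw [integral_map (by fun_prop) (Measurable.aestronglyMeasurable (by fun_prop))]
  · rintro _ ⟨ω, ⟨⟨hp, c1, c2⟩, e⟩, rfl⟩
    let Y : Euc d × Euc d → Euc d := fun p => ((1/2) * ⟪θ, p.1⟫ + (1/2) * ⟪θ, p.2⟫) • θ
    have hY : Measurable Y := by
      have : Measurable (fun p : Euc d × Euc d => (1/2) * ⟪θ, p.1⟫ + (1/2) * ⟪θ, p.2⟫) := by fun_prop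
      exact (smul_meas θ).comp this
    have hYp : Measurable (fun p => (Y p, p)) := hY.prodMk measurable_id
    have a1 := law_ae measurable_fst c1 h1.Ur_ae
    have a2 := law_ae measurable_snd c2 h2.Ur_ae
    have yeq : ∀ᵐ p ∂ω, Y p = mid θ μ1 μ2 (Ur θ μ1 p.1) • θ := by
      filter_upwards [a1, a2, e] with p a b c
      simp only [Y, mid]
      rw [← a.2, ← b.2, ← c]
    have lU := law_comp measurable_fst h1.Ur_meas c1 h1.Ur_map
    have mU1 : Measurable fun p : Euc d × Euc d => Ur θ μ1 p.1 := h1.Ur_meas.comp measurable_fst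
    have lY : ω.map Y = pivotMiddle θ μ1 μ2 := by
      rw [Measure.map_congr yeq, pm_eq']
      have := AEMeasurable.map_map_of_aemeasurable (μ := ω) (f := fun p => Ur θ μ1 p.1)
        (g := fun u => mid θ μ1 μ2 u • θ) (by rw [lU]; exact smid_aem h1 h2) mU1.aemeasurable
      rw [lU] at this
      exact this.symm
    have vY : ∀ᵐ p ∂ω, Vr θ μ1 μ2 (Y p) = Ur θ μ1 p.1 := by
      filter_upwards [yeq, a1] with p hy ha
      rw [hy, Vr_mid hθ h1 h2 ha.1]
    have k1 : Measurable (fun p : Euc d × Euc d => (Y p, p.1)) := hY.prodMk measurable_fst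
    have k2 : Measurable (fun p : Euc d × Euc d => (Y p, p.2)) := hY.prodMk measurable_snd
    refine ⟨ω.map (fun p => (Y p, p)), ⟨Measure.isProbabilityMeasure_map hYp.aemeasurable, ?_, ?_⟩, ?_⟩
    · rw [opt_iff hθ h1 h2, Measure.map_map g1 hYp]
      refine ⟨⟨Measure.isProbabilityMeasure_map (g1.comp hYp).aemeasurable, ?_, ?_⟩, ?_⟩
      · rw [Measure.map_map (by fun_prop) (g1.comp hYp)]; exact lY
      · rw [Measure.map_map (by fun_prop) (g1.comp hYp)]; exact c1
      · refine (ae_map_iff (g1.comp hYp).aemeasurable (measurableSet_eq_fun ((Vr_meas h1 h2).comp measurable_fst)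
          (h1.Ur_meas.comp measurable_snd))).2 ?_
        exact vY
    · rw [pm_symm, opt_iff hθ h2 h1, Measure.map_map g2 hYp]
      refine ⟨⟨Measure.isProbabilityMeasure_map (g2.comp hYp).aemeasurable, ?_, ?_⟩, ?_⟩
      · rw [Measure.map_map (by fun_prop) (g2.comp hYp), pm_symm]; exact lY
      · rw [Measure.map_map (by fun_prop) (g2.comp hYp)]; exact c2
      · refine (ae_map_iff (g2.comp hYp).aemeasurable (measurableSet_eq_fun ((Vr_meas h2 h1).comp measurable_fst)
          (h2.Ur_meas.comp measurable_snd))).2 ?_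
        filter_upwards [vY, e] with p a b
        rw [Vr_symm]
        exact a.trans b
    · unfold tCost pivotCost
      rw [integral_map hYp.aemeasurable (Measurable.aestronglyMeasurable (by fun_prop))]

lemma Om_nonempty (h1 : InP θ μ1) (h2 : InP θ μ2) : (Om θ μ1 μ2).Nonempty := by
  have := h1.prob
  have := h2.prob
  have m1 : Measurable (fun x => (x, Ur θ μ1 x)) := measurable_id.prodMk h1.Ur_meas
  have m2 : Measurable (fun x => (Ur θ μ2 x, x)) := h2.Ur_meas.prodMk measurable_id
  have := Measure.isProbabilityMeasure_map (μ := μ1) m1.aemeasurable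
  have := Measure.isProbabilityMeasure_map (μ := μ2) m2.aemeasurable
  obtain ⟨γ, hγ, e1, e2⟩ := glue (μ1.map (fun x => (x, Ur θ μ1 x))) (μ2.map (fun x => (Ur θ μ2 x, x))) (by
    rw [Measure.map_map measurable_snd m1, Measure.map_map measurable_fst m2]
    exact h1.Ur_map.trans h2.Ur_map.symm)
  have mf : Measurable (fun p : (Euc d × ℝ) × Euc d => (p.1.2, p.2)) := by fun_prop
  have mg : Measurable (fun p : (Euc d × ℝ) × Euc d => (p.1.1, p.2)) := by fun_prop
  have i1 : ∀ᵐ q ∂(μ1.map (fun x => (x, Ur θ μ1 x))), q.2 = Ur θ μ1 q.1 :=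
    (ae_map_iff m1.aemeasurable (measurableSet_eq_fun measurable_snd (h1.Ur_meas.comp measurable_fst))).2
      (ae_of_all _ fun _ => rfl)
  have i2 : ∀ᵐ q ∂(μ2.map (fun x => (Ur θ μ2 x, x))), q.1 = Ur θ μ2 q.2 :=
    (ae_map_iff m2.aemeasurable (measurableSet_eq_fun measurable_fst (h2.Ur_meas.comp measurable_snd))).2
      (ae_of_all _ fun _ => rfl)
  have i1 := law_ae measurable_fst e1 i1
  have i2 := law_ae mf e2 i2
  refine ⟨γ.map (fun p => (p.1.1, p.2)), ⟨Measure.isProbabilityMeasure_map mg.aemeasurable, ?_, ?_⟩, ?_⟩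
  · rw [Measure.map_map measurable_fst mg]
    have r : (μ1.map (fun x => (x, Ur θ μ1 x))).map Prod.fst = μ1 := by
      rw [Measure.map_map measurable_fst m1]; exact Measure.map_id
    exact law_comp (f := Prod.fst) (g := Prod.fst) measurable_fst measurable_fst e1 r
  · rw [Measure.map_map measurable_snd mg]
    have r : (μ2.map (fun x => (Ur θ μ2 x, x))).map Prod.snd = μ2 := by
      rw [Measure.map_map measurable_snd m2]; exact Measure.map_id
    exact law_comp (f := fun p : (Euc d × ℝ) × Euc d => (p.1.2, p.2)) (g := Prod.snd) mf measurable_snd e2 r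
  · refine (ae_map_iff mg.aemeasurable (measurableSet_eq_fun (h1.Ur_meas.comp measurable_fst)
        (h2.Ur_meas.comp measurable_snd))).2 ?_
    filter_upwards [i1, i2] with p a b
    exact a.symm.trans b

lemma l2_tri {A E : Type*} [MeasurableSpace A] [NormedAddCommGroup E] {P : Measure A} {f g : A → E}
    (hf : MemLp f 2 P) (hg : MemLp g 2 P) :
    √(∫ a, ‖f a + g a‖ ^ 2 ∂P) ≤ √(∫ a, ‖f a‖ ^ 2 ∂P) + √(∫ a, ‖g a‖ ^ 2 ∂P) := by
  have key : ∀ {h : A → E}, MemLp h 2 P → √(∫ a, ‖h a‖ ^ 2 ∂P) = (eLpNorm h 2 P).toReal := by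
    intro h hh
    rw [hh.eLpNorm_eq_integral_rpow_norm (by norm_num) (by norm_num)]
    rw [ENNReal.toReal_ofReal (by positivity), Real.sqrt_eq_rpow]
    simp
  have k3 := key (hf.add hg)
  simp only [Pi.add_apply] at k3
  rw [key hf, key hg, k3, ← ENNReal.toReal_add hf.2.ne hg.2.ne]
  exact ENNReal.toReal_mono (by simp [hf.2.ne, hg.2.ne]) (eLpNorm_add_le hf.1 hg.1 (by norm_num))

lemma cost_tri (h1 : InP θ μ1) (h2 : InP θ μ2) (h3 : InP θ μ3) {a b : Measure (Euc d × Euc d)}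
    (ha : a ∈ Om θ μ1 μ2) (hb : b ∈ Om θ μ2 μ3) :
    ∃ c ∈ Om θ μ1 μ3, √(tCost c) ≤ √(tCost a) + √(tCost b) := by
  obtain ⟨⟨pa, a1, a2⟩, ea⟩ := ha
  obtain ⟨⟨pb, b1, b2⟩, eb⟩ := hb
  obtain ⟨γ, hγ, e1, e2⟩ := glue a b (a2.trans b1.symm)
  have mf : Measurable (fun p : (Euc d × Euc d) × Euc d => (p.1.2, p.2)) := by fun_prop
  have mg : Measurable (fun p : (Euc d × Euc d) × Euc d => (p.1.1, p.2)) := by fun_prop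
  have c1 : γ.map (fun p => p.1.1) = μ1 := law_comp measurable_fst measurable_fst e1 a1
  have c2 : γ.map (fun p => p.1.2) = μ2 := law_comp measurable_fst measurable_snd e1 a2
  have c3 : γ.map (fun p => p.2) = μ3 := law_comp (f := fun p : (Euc d × Euc d) × Euc d => (p.1.2, p.2)) (g := Prod.snd) mf measurable_snd e2 b2
  have i1 := law_ae measurable_fst e1 ea
  have i2 := law_ae mf e2 eb
  have l1 : MemLp (fun p : (Euc d × Euc d) × Euc d => p.1.1) 2 γ := by
    have := h1.memLp_id; rw [← c1] at this
    exact (memLp_map_measure_iff (f := fun p : (Euc d × Euc d) × Euc d => p.1.1) (g := fun x => x) (Measurable.aestronglyMeasurable (by fun_prop)) (by fun_prop)).1 this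
  have l2 : MemLp (fun p : (Euc d × Euc d) × Euc d => p.1.2) 2 γ := by
    have := h2.memLp_id; rw [← c2] at this
    exact (memLp_map_measure_iff (f := fun p : (Euc d × Euc d) × Euc d => p.1.2) (g := fun x => x) (Measurable.aestronglyMeasurable (by fun_prop)) (by fun_prop)).1 this
  have l3 : MemLp (fun p : (Euc d × Euc d) × Euc d => p.2) 2 γ := by
    have := h3.memLp_id; rw [← c3] at this
    exact (memLp_map_measure_iff (f := fun p : (Euc d × Euc d) × Euc d => p.2) (g := fun x => x) (Measurable.aestronglyMeasurable (by fun_prop)) (by fun_prop)).1 this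
  refine ⟨γ.map (fun p => (p.1.1, p.2)), ⟨⟨Measure.isProbabilityMeasure_map mg.aemeasurable, ?_, ?_⟩, ?_⟩, ?_⟩
  · rw [Measure.map_map measurable_fst mg]; exact c1
  · rw [Measure.map_map measurable_snd mg]; exact c3
  · refine (ae_map_iff mg.aemeasurable (measurableSet_eq_fun (h1.Ur_meas.comp measurable_fst)
        (h3.Ur_meas.comp measurable_snd))).2 ?_
    filter_upwards [i1, i2] with p a b
    exact a.trans b
  · rw [← e1, ← e2]
    unfold tCost
    rw [integral_map (by fun_prop) (Measurable.aestronglyMeasurable (by fun_prop)),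
      integral_map (by fun_prop) (Measurable.aestronglyMeasurable (by fun_prop)),
      integral_map (by fun_prop) (Measurable.aestronglyMeasurable (by fun_prop))]
    have := l2_tri (l1.sub l2) (l2.sub l3)
    simpa using this

lemma sqrt_inf {S : Set ℝ} (hS : S.Nonempty) {a b : ℝ} (h : ∀ c ∈ S, a ≤ √c + b) :
    a ≤ √(sInf S) + b := by
  rcases le_or_gt (a - b) 0 with h' | h'
  · have := Real.sqrt_nonneg (sInf S); linarith
  · have : a - b ≤ √(sInf S) := by
      refine Real.le_sqrt_of_sq_le (le_csInf hS fun c hc => ?_)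
      have h1 := h c hc
      exact (Real.le_sqrt' h').1 (by linarith)
    linarith

lemma tCost_nonneg {E : Type*} [NormedAddCommGroup E] [MeasurableSpace E] (π : Measure (E × E)) : 0 ≤ tCost π :=
  integral_nonneg fun _ => by positivity

lemma bdd (S : Set (Measure (Euc d × Euc d))) : BddBelow (tCost '' S) :=
  ⟨0, by rintro _ ⟨π, -, rfl⟩; exact tCost_nonneg π⟩

lemma PS_tri (hθ : ‖θ‖ = 1) (h1 : InP θ μ1) (h2 : InP θ μ2) (h3 : InP θ μ3) :
    PS θ μ1 μ3 ≤ PS θ μ1 μ2 + PS θ μ2 μ3 := by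
  unfold PS
  rw [PSsq_eq hθ h1 h2, PSsq_eq hθ h2 h3, PSsq_eq hθ h1 h3]
  refine sqrt_inf ((Om_nonempty h1 h2).image _) ?_
  rintro _ ⟨a, ha, rfl⟩
  rw [add_comm]
  refine sqrt_inf ((Om_nonempty h2 h3).image _) ?_
  rintro _ ⟨b, hb, rfl⟩
  obtain ⟨c, hc, hle⟩ := cost_tri h1 h2 h3 ha hb
  rw [add_comm]
  exact le_trans (Real.sqrt_le_sqrt (csInf_le (bdd _) ⟨c, hc, rfl⟩)) hle

lemma PS_symm_le (hθ : ‖θ‖ = 1) (h1 : InP θ μ1) (h2 : InP θ μ2) : PS θ μ1 μ2 ≤ PS θ μ2 μ1 := by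
  unfold PS
  rw [PSsq_eq hθ h1 h2, PSsq_eq hθ h2 h1]
  refine Real.sqrt_le_sqrt (le_csInf ((Om_nonempty h2 h1).image _) ?_)
  rintro _ ⟨b, ⟨⟨hp, b1, b2⟩, e⟩, rfl⟩
  refine csInf_le (bdd _) ⟨b.map Prod.swap, ⟨⟨Measure.isProbabilityMeasure_map (by fun_prop), ?_, ?_⟩, ?_⟩, ?_⟩
  · rw [Measure.map_map measurable_fst measurable_swap]; exact b2
  · rw [Measure.map_map measurable_snd measurable_swap]; exact b1
  · refine (ae_map_iff measurable_swap.aemeasurable (measurableSet_eq_fun (h1.Ur_meas.comp measurable_fst)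
        (h2.Ur_meas.comp measurable_snd))).2 ?_
    filter_upwards [e] with p a
    exact a.symm
  · unfold tCost
    rw [integral_map (by fun_prop) (Measurable.aestronglyMeasurable (by fun_prop))]
    simp [norm_sub_rev]

lemma PS_self (hθ : ‖θ‖ = 1) (h : InP θ μ) : PS θ μ μ = 0 := by
  have := h.prob
  unfold PS
  rw [PSsq_eq hθ h h, Real.sqrt_eq_zero']
  have md : Measurable (fun x : Euc d => (x, x)) := by fun_prop
  refine csInf_le (bdd _) ⟨μ.map (fun x => (x, x)), ⟨⟨Measure.isProbabilityMeasure_map (by fun_prop), ?_, ?_⟩, ?_⟩, ?_⟩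
  · rw [Measure.map_map measurable_fst md]; exact Measure.map_id
  · rw [Measure.map_map measurable_snd md]; exact Measure.map_id
  · refine (ae_map_iff md.aemeasurable (measurableSet_eq_fun (h.Ur_meas.comp measurable_fst)
        (h.Ur_meas.comp measurable_snd))).2 ?_
    exact ae_of_all _ fun _ => rfl
  · unfold tCost
    rw [integral_map (by fun_prop) (Measurable.aestronglyMeasurable (by fun_prop))]
    simp

lemma charFun_le (h1 : InP θ μ1) (h2 : InP θ μ2) {a : Measure (Euc d × Euc d)} (ha : a ∈ Coupling μ1 μ2) (t : Euc d) :
    ‖charFun μ1 t - charFun μ2 t‖ ≤ ‖t‖ * √(tCost a) := by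
  obtain ⟨pa, a1, a2⟩ := ha
  have l1 : MemLp (fun p : Euc d × Euc d => p.1) 2 a := by
    have := h1.memLp_id; rw [← a1] at this
    exact (memLp_map_measure_iff (f := Prod.fst) (g := fun x => x) (Measurable.aestronglyMeasurable (by fun_prop)) (by fun_prop)).1 this
  have l2 : MemLp (fun p : Euc d × Euc d => p.2) 2 a := by
    have := h2.memLp_id; rw [← a2] at this
    exact (memLp_map_measure_iff (f := Prod.snd) (g := fun x => x) (Measurable.aestronglyMeasurable (by fun_prop)) (by fun_prop)).1 this
  have l : MemLp (fun p : Euc d × Euc d => ‖p.1 - p.2‖) 2 a := (l1.sub l2).norm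
  have e1 : charFun μ1 t = ∫ p, Complex.exp (⟪p.1, t⟫ * Complex.I) ∂a := by
    rw [charFun_apply, ← a1, integral_map (by fun_prop) (Measurable.aestronglyMeasurable (by fun_prop))]
  have e2 : charFun μ2 t = ∫ p, Complex.exp (⟪p.2, t⟫ * Complex.I) ∂a := by
    rw [charFun_apply, ← a2, integral_map (by fun_prop) (Measurable.aestronglyMeasurable (by fun_prop))]
  have i1 : Integrable (fun p : Euc d × Euc d => Complex.exp (⟪p.1, t⟫ * Complex.I)) a := by
    refine Integrable.of_bound (Measurable.aestronglyMeasurable (by fun_prop)) 1 (ae_of_all _ fun p => ?_)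
    rw [Complex.norm_exp_ofReal_mul_I]
  have i2 : Integrable (fun p : Euc d × Euc d => Complex.exp (⟪p.2, t⟫ * Complex.I)) a := by
    refine Integrable.of_bound (Measurable.aestronglyMeasurable (by fun_prop)) 1 (ae_of_all _ fun p => ?_)
    rw [Complex.norm_exp_ofReal_mul_I]
  rw [e1, e2, ← integral_sub i1 i2]
  have li : Integrable (fun p : Euc d × Euc d => ‖p.1 - p.2‖) a := l.integrable (by norm_num)
  calc _ ≤ ∫ p, ‖Complex.exp (⟪p.1, t⟫ * Complex.I) - Complex.exp (⟪p.2, t⟫ * Complex.I)‖ ∂a :=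
        norm_integral_le_integral_norm _
    _ ≤ ∫ p, ‖t‖ * ‖p.1 - p.2‖ ∂a := by
        refine integral_mono (i1.sub i2).norm (li.const_mul _) fun p => ?_
        have : Complex.exp (⟪p.1, t⟫ * Complex.I) - Complex.exp (⟪p.2, t⟫ * Complex.I)
          = Complex.exp (⟪p.2, t⟫ * Complex.I) * (Complex.exp (Complex.I * ((⟪p.1, t⟫ - ⟪p.2, t⟫ : ℝ) : ℂ)) - 1) := by
          rw [mul_sub, ← Complex.exp_add, mul_one]
          congr 2
          push_cast; ring
        simp only
        rw [this, norm_mul, Complex.norm_exp_ofReal_mul_I, one_mul]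
        refine (Real.norm_exp_I_mul_ofReal_sub_one_le).trans ?_
        rw [← inner_sub_left, mul_comm]
        exact norm_inner_le_norm _ _
    _ = ‖t‖ * ∫ p, ‖p.1 - p.2‖ ∂a := integral_const_mul _ _
    _ ≤ _ := by
        gcongr
        refine Real.le_sqrt_of_sq_le ?_
        have hv := variance_nonneg (fun p : Euc d × Euc d => ‖p.1 - p.2‖) a
        rw [variance_eq_sub l] at hv
        simp only [Pi.pow_apply, Pi.sub_apply] at hv
        unfold tCost
        linarith

lemma PS_sep (hθ : ‖θ‖ = 1) (h1 : InP θ μ1) (h2 : InP θ μ2) (h : PS θ μ1 μ2 = 0) : μ1 = μ2 := by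
  have := h1.prob
  have := h2.prob
  unfold PS at h
  rw [PSsq_eq hθ h1 h2] at h
  refine Measure.ext_of_charFun ?_
  ext t
  rw [← sub_eq_zero, ← norm_le_zero_iff]
  rcases eq_or_ne t 0 with rfl | ht
  · obtain ⟨a, ha⟩ := Om_nonempty h1 h2
    simpa using charFun_le h1 h2 ha.1 0
  have ht : 0 < ‖t‖ := norm_pos_iff.2 ht
  have := sqrt_inf (a := ‖charFun μ1 t - charFun μ2 t‖ / ‖t‖) (b := 0) ((Om_nonempty h1 h2).image tCost) (by
    rintro _ ⟨a, ha, rfl⟩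
    rw [add_zero, div_le_iff₀ ht, mul_comm]
    exact charFun_le h1 h2 ha.1 t)
  rw [h, add_zero, div_le_iff₀ ht, zero_mul] at this
  exact this
end

/-- `PS_θ` is a metric on the set of measures with atomless projections:
non-negativity, separation, symmetry and the triangle inequality. -/
theorem PS_metric_on_atomless {d : ℕ} (θ : Euc d) (hθ : ‖θ‖ = 1) :
    (∀ μ1 ∈ P2a θ, ∀ μ2 ∈ P2a θ,
      0 ≤ PS θ μ1 μ2 ∧ (PS θ μ1 μ2 = 0 ↔ μ1 = μ2) ∧ PS θ μ1 μ2 = PS θ μ2 μ1) ∧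
    (∀ μ1 ∈ P2a θ, ∀ μ2 ∈ P2a θ, ∀ μ3 ∈ P2a θ,
      PS θ μ1 μ3 ≤ PS θ μ1 μ2 + PS θ μ2 μ3) := by
  refine ⟨fun μ1 h1 μ2 h2 => ⟨Real.sqrt_nonneg _, ⟨PS_sep hθ ⟨h1⟩ ⟨h2⟩, ?_⟩,
    le_antisymm (PS_symm_le hθ ⟨h1⟩ ⟨h2⟩) (PS_symm_le hθ ⟨h2⟩ ⟨h1⟩)⟩,
    fun μ1 h1 μ2 h2 μ3 h3 => PS_tri hθ ⟨h1⟩ ⟨h2⟩ ⟨h3⟩⟩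
  rintro rfl
  exact PS_self hθ ⟨h1⟩

end
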